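/- arXiv:1807.09783 — 9 statements merged into one kernel-verified Lean document; each statement's English description precedes it below -/
import Mathlib

section
/- Let H_X and H_Z be l×n matrices over ℤ₂ with H_X·H_Zᵀ = 0, rank(H_X) = rank(H_Z) = l, such that every row and every column of H_X has at most t nonzero entries, and every row and every column of H_Z has at most t nonzero entries. Then there exists an n×n matrix δ over ℤ₂ with δ·δ = 0 such that the row space of δ equals the row space of H_X, the column space of δ equals the span of the rows of H_Z (viewed as column vectors), and every row and every column of δ has at most t² nonzero entries. -/
namespace Matrix

/-- The rows of a product `A * B` are linear combinations of the rows of `B`. -/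
theorem span_range_mul_le {R l m n : Type*} [CommSemiring R] [Fintype m]
    (A : Matrix l m R) (B : Matrix m n R) :
    Submodule.span R (Set.range (A * B)) ≤ Submodule.span R (Set.range B) := by
  rw [Submodule.span_le]
  rintro _ ⟨i, rfl⟩
  have h : (A * B) i = ∑ k, A i k • B k := by
    ext j
    simp [mul_apply]
  rw [h]
  exact Submodule.sum_mem _ fun k _ =>
    Submodule.smul_mem _ _ (Submodule.subset_span ⟨k, rfl⟩)

/-- Multiplying on the left by a left-invertible matrix preserves the row space. -/
theorem span_range_mul_eq_of_left_inverse {R l m n : Type*} [CommSemiring R] [Fintype l]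
    [Fintype m] [DecidableEq m] {A : Matrix l m R} {C : Matrix m l R} (hCA : C * A = 1)
    (B : Matrix m n R) :
    Submodule.span R (Set.range (A * B)) = Submodule.span R (Set.range B) := by
  refine le_antisymm (span_range_mul_le A B) ?_
  have h := span_range_mul_le C (A * B)
  rwa [← Matrix.mul_assoc, hCA, Matrix.one_mul] at h

/-- A matrix over a field of full row rank has a right inverse. -/
theorem exists_right_inverse_of_rank_eq_card {K m n : Type*} [Field K] [Fintype m]
    [DecidableEq m] [Fintype n] {A : Matrix m n K} (hA : A.rank = Fintype.card m) :
    ∃ B : Matrix n m K, A * B = 1 := by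
  rw [← mulVec_surjective_iff_exists_right_inverse]
  have h : LinearMap.range A.mulVecLin = ⊤ :=
    Submodule.eq_top_of_finrank_eq (by rw [Module.finrank_fintype_fun_eq_card]; exact hA)
  exact LinearMap.range_eq_top.mp h

/-- If row `i` of `A` has at most `r` nonzero entries and every row of `B` has at most `s`,
then row `i` of `A * B` has at most `r * s`. -/
theorem card_filter_mul_row_ne_zero_le {R l m n : Type*} [NonUnitalNonAssocSemiring R]
    [DecidableEq R] [Fintype m] [Fintype n] (A : Matrix l m R) (B : Matrix m n R) (i : l)
    {r s : ℕ} (hA : (Finset.univ.filter fun k => A i k ≠ 0).card ≤ r)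
    (hB : ∀ k, (Finset.univ.filter fun j => B k j ≠ 0).card ≤ s) :
    (Finset.univ.filter fun j => (A * B) i j ≠ 0).card ≤ r * s := by
  classical
  have hsub : (Finset.univ.filter fun j => (A * B) i j ≠ 0) ⊆
      (Finset.univ.filter fun k => A i k ≠ 0).biUnion
        fun k => Finset.univ.filter fun j => B k j ≠ 0 := by
    intro j hj
    rw [Finset.mem_filter_univ, mul_apply] at hj
    obtain ⟨k, -, hk⟩ := Finset.exists_ne_zero_of_sum_ne_zero hj
    simp only [Finset.mem_biUnion, Finset.mem_filter_univ]
    exact ⟨k, left_ne_zero_of_mul hk, right_ne_zero_of_mul hk⟩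
  calc _ ≤ _ := Finset.card_le_card hsub
    _ ≤ _ := Finset.card_biUnion_le_card_mul _ _ s fun k _ => hB k
    _ ≤ r * s := Nat.mul_le_mul_right s hA

end Matrix

/-- Given full-rank CSS check matrices `H_X`, `H_Z` of sparsity
`t`, there is a single-sector boundary operator `δ` (with `δ·δ = 0`) whose rows
span the X-stabilizers, whose columns span the Z-stabilizers, and whose rows and
columns each have at most `t²` nonzero entries. -/
theorem exists_sparse_boundary_operator
    {l n : ℕ} (HX HZ : Matrix (Fin l) (Fin n) (ZMod 2)) (t : ℕ)
    (hcomm : HX * HZ.transpose = 0)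
    (hrX : HX.rank = l) (hrZ : HZ.rank = l)
    (hXrow : ∀ i : Fin l, (Finset.univ.filter fun j : Fin n => HX i j ≠ 0).card ≤ t)
    (hXcol : ∀ j : Fin n, (Finset.univ.filter fun i : Fin l => HX i j ≠ 0).card ≤ t)
    (hZrow : ∀ i : Fin l, (Finset.univ.filter fun j : Fin n => HZ i j ≠ 0).card ≤ t)
    (hZcol : ∀ j : Fin n, (Finset.univ.filter fun i : Fin l => HZ i j ≠ 0).card ≤ t) :
    ∃ δ : Matrix (Fin n) (Fin n) (ZMod 2), δ * δ = 0 ∧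
      Submodule.span (ZMod 2) (Set.range δ) = Submodule.span (ZMod 2) (Set.range HX) ∧
      Submodule.span (ZMod 2) (Set.range δ.transpose)
        = Submodule.span (ZMod 2) (Set.range HZ) ∧
      (∀ i : Fin n, (Finset.univ.filter fun j : Fin n => δ i j ≠ 0).card ≤ t ^ 2) ∧
      (∀ j : Fin n, (Finset.univ.filter fun i : Fin n => δ i j ≠ 0).card ≤ t ^ 2) := by
  obtain ⟨RX, hRX⟩ := Matrix.exists_right_inverse_of_rank_eq_card (A := HX) (by simpa using hrX)
  obtain ⟨RZ, hRZ⟩ := Matrix.exists_right_inverse_of_rank_eq_card (A := HZ) (by simpa using hrZ)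
  have hLX : RX.transpose * HX.transpose = 1 := by
    rw [← Matrix.transpose_mul, hRX, Matrix.transpose_one]
  have hLZ : RZ.transpose * HZ.transpose = 1 := by
    rw [← Matrix.transpose_mul, hRZ, Matrix.transpose_one]
  have hT : (HZ.transpose * HX).transpose = HX.transpose * HZ := by
    rw [Matrix.transpose_mul, Matrix.transpose_transpose]
  refine ⟨HZ.transpose * HX, ?_, Matrix.span_range_mul_eq_of_left_inverse hLZ HX, ?_,
    fun i => ?_, fun j => ?_⟩
  · rw [Matrix.mul_assoc, ← Matrix.mul_assoc HX, hcomm, Matrix.zero_mul, Matrix.mul_zero]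
  · rw [hT]
    exact Matrix.span_range_mul_eq_of_left_inverse hLX HZ
  · rw [sq]
    exact Matrix.card_filter_mul_row_ne_zero_le HZ.transpose HX i (hZcol i) hXrow
  · rw [sq]
    have h := Matrix.card_filter_mul_row_ne_zero_le HX.transpose HZ j (hXcol j) hZrow
    rwa [← hT] at h
end

section
/- Let δ₁ be an n₁×n₁ matrix and δ₂ an n₂×n₂ matrix over ℤ₂ with δ₁·δ₁ = 0 and δ₂·δ₂ = 0, and let ∂ = δ₁ ⊗ 1 + 1 ⊗ δ₂ be the homological product boundary operator. Then the kernel of the linear map w ↦ ∂·w on vectors indexed by Fin n₁ × Fin n₂ equals the sum of (i) the span of all pure tensors of kernel vectors, i.e., the span of {w : ∃ u, v with δ₁·u = 0, δ₂·v = 0, and w(i,j) = u(i)·v(j) for all (i,j)}, and (ii) the image of the linear map w ↦ ∂·w. In symbols: ker ∂ = ker δ₁ ⊗ ker δ₂ + im ∂. -/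
open Matrix in
/-- Every square matrix over a field has a generalized inverse. -/
theorem Matrix.exists_mul_mul_eq_self {K n : Type*} [Field K] [Fintype n] [DecidableEq n]
    (A : Matrix n n K) : ∃ S : Matrix n n K, A * S * A = A := by
  obtain ⟨g, hg⟩ := (toLin' A).rangeRestrict.exists_rightInverse_of_surjective
    (LinearMap.range_rangeRestrict _)
  obtain ⟨G, hG⟩ := LinearMap.exists_extend g
  refine ⟨LinearMap.toMatrix' G, toLin'.injective (LinearMap.ext fun x => ?_)⟩
  have hx : G (toLin' A x) = g ((toLin' A).rangeRestrict x) :=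
    LinearMap.congr_fun hG ((toLin' A).rangeRestrict x)
  have hgx := congrArg Subtype.val (LinearMap.congr_fun hg ((toLin' A).rangeRestrict x))
  rw [toLin'_mul, toLin'_mul, toLin'_toMatrix', LinearMap.comp_apply, LinearMap.comp_apply, hx]
  exact hgx

/-- In characteristic two, a solution of `A * W + W * B = 0` with `A` and `B` square-zero is
homologous to `P * W * Q`, where `P` and `Q` do not depend on `W` and are annihilated by
`A` and `B` respectively. -/
theorem Matrix.exists_harmonic_decomposition {K m n : Type*} [Field K] [CharP K 2]
    [Fintype m] [DecidableEq m] [Fintype n] [DecidableEq n]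
    {A : Matrix m m K} {B : Matrix n n K} (hA : A * A = 0) (hB : B * B = 0) :
    ∃ (P : Matrix m m K) (Q : Matrix n n K), A * P = 0 ∧ Q * B = 0 ∧
      ∀ W : Matrix m n K, A * W + W * B = 0 →
        ∃ Z : Matrix m n K, W = P * W * Q + (A * Z + Z * B) := by
  obtain ⟨S, hS⟩ := A.exists_mul_mul_eq_self
  obtain ⟨T, hT⟩ := B.exists_mul_mul_eq_self
  have hPA : (1 - A * S - S * A) * A = 0 := by
    simp [sub_mul, hS, mul_assoc S, hA]
  have hAP : A * (1 - A * S - S * A) = 0 := by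
    simp [mul_sub, ← mul_assoc, hS, hA]
  have hQB : (1 - B * T - T * B) * B = 0 := by
    simp [sub_mul, hT, mul_assoc T, hB]
  refine ⟨1 - A * S - S * A, 1 - B * T - T * B, hAP, hQB, fun W hW => ?_⟩
  have hAW : A * W = W * B := by
    ext i j
    have hij := congrFun (congrFun hW i) j
    exact CharTwo.add_eq_zero.mp hij
  set P := 1 - A * S - S * A with hP
  have hPW : W = P * W + (A * (S * W) + S * W * B) := by
    rw [Matrix.mul_assoc S, ← hAW, hP]
    simp only [Matrix.sub_mul, Matrix.one_mul, Matrix.mul_assoc]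
    abel
  have hPWB : P * W * B = 0 := by
    rw [Matrix.mul_assoc, ← hAW, ← Matrix.mul_assoc, hPA, Matrix.zero_mul]
  have hPWQ : P * W = P * W * (1 - B * T - T * B) + (A * (P * W * T) + P * W * T * B) := by
    have hzero : A * (P * W * T) = 0 := by
      rw [Matrix.mul_assoc, ← Matrix.mul_assoc A, hAP, Matrix.zero_mul]
    have hBT : P * W * (B * T) = 0 := by
      rw [← Matrix.mul_assoc, hPWB, Matrix.zero_mul]
    rw [hzero, Matrix.mul_sub, Matrix.mul_sub, hBT, ← Matrix.mul_assoc _ T B, Matrix.mul_one]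
    abel
  refine ⟨S * W + P * W * T, ?_⟩
  rw [Matrix.mul_add, Matrix.add_mul]
  calc W = P * W + (A * (S * W) + S * W * B) := hPW
    _ = P * W * (1 - B * T - T * B) + (A * (P * W * T) + P * W * T * B)
        + (A * (S * W) + S * W * B) := by rw [← hPWQ]
    _ = _ := by abel

/-- The Kronecker sum of `A` and `B` acts on a vector indexed by pairs, viewed as a matrix `W`,
by `W ↦ A * W + W * Bᵀ`. -/
theorem Matrix.mulVec_kroneckerSum {R m n : Type*} [CommRing R]
    [Fintype m] [DecidableEq m] [Fintype n] [DecidableEq n]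
    {A : Matrix m m R} {B : Matrix n n R} {D : Matrix (m × n) (m × n) R}
    (hD : ∀ p q : m × n, D p q = A p.1 q.1 * (if p.2 = q.2 then 1 else 0)
      + (if p.1 = q.1 then 1 else 0) * B p.2 q.2)
    (W : Matrix m n R) (p : m × n) :
    D.mulVec (fun q => W q.1 q.2) p = (A * W + W * B.transpose) p.1 p.2 := by
  simp only [Matrix.mulVec, dotProduct, Fintype.sum_prod_type, hD, add_mul,
    Finset.sum_add_distrib, Matrix.add_apply, Matrix.mul_apply, Matrix.transpose_apply]
  congr 1
  · simp
  · rw [Finset.sum_comm]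
    simp [mul_comm]

/-- `ker ∂ = ker δ₁ ⊗ ker δ₂ + im ∂` for the homological
product boundary operator `∂ = δ₁ ⊗ 1 + 1 ⊗ δ₂`: the kernel of `∂` is the span
of pure tensors of kernel vectors together with the image of `∂`. -/
theorem homological_product_kernel
    {n₁ n₂ : ℕ} (δ₁ : Matrix (Fin n₁) (Fin n₁) (ZMod 2))
    (δ₂ : Matrix (Fin n₂) (Fin n₂) (ZMod 2))
    (h₁ : δ₁ * δ₁ = 0) (h₂ : δ₂ * δ₂ = 0)
    (bd : Matrix (Fin n₁ × Fin n₂) (Fin n₁ × Fin n₂) (ZMod 2))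
    (hbd : ∀ p q : Fin n₁ × Fin n₂,
      bd p q = δ₁ p.1 q.1 * (if p.2 = q.2 then 1 else 0)
        + (if p.1 = q.1 then 1 else 0) * δ₂ p.2 q.2) :
    LinearMap.ker bd.mulVecLin =
      Submodule.span (ZMod 2) {w : Fin n₁ × Fin n₂ → ZMod 2 |
        ∃ u : Fin n₁ → ZMod 2, ∃ v : Fin n₂ → ZMod 2,
          δ₁.mulVec u = 0 ∧ δ₂.mulVec v = 0 ∧
          ∀ p : Fin n₁ × Fin n₂, w p = u p.1 * v p.2}
      ⊔ LinearMap.range bd.mulVecLin := by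
  have hmul := Matrix.mulVec_kroneckerSum hbd
  have h₂' : δ₂.transpose * δ₂.transpose = 0 := by
    rw [← Matrix.transpose_mul, h₂, Matrix.transpose_zero]
  apply le_antisymm
  · intro w hw
    obtain ⟨P, Q, hP, hQ, hPQ⟩ := Matrix.exists_harmonic_decomposition h₁ h₂'
    let W : Matrix (Fin n₁) (Fin n₂) (ZMod 2) := Matrix.of fun i j => w (i, j)
    obtain ⟨Z, hZ⟩ := hPQ W (by
      ext i j
      rw [← hmul W (i, j)]
      exact congrFun hw (i, j))
    have hwZ : w = (fun p => (P * W * Q) p.1 p.2) + bd.mulVecLin (fun p => Z p.1 p.2) := by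
      funext p
      rw [Pi.add_apply, Matrix.mulVecLin_apply, hmul Z p]
      exact congrFun (congrFun hZ p.1) p.2
    rw [hwZ]
    refine Submodule.add_mem_sup ?_ (LinearMap.mem_range_self _ _)
    have hsum : (fun p : Fin n₁ × Fin n₂ => (P * W * Q) p.1 p.2)
        = ∑ j, ∑ i, W i j • fun p : Fin n₁ × Fin n₂ => P p.1 i * Q j p.2 := by
      funext p
      simp only [Matrix.mul_apply, Finset.sum_apply, Pi.smul_apply, smul_eq_mul, Finset.sum_mul]
      exact Finset.sum_congr rfl fun j _ => Finset.sum_congr rfl fun i _ => by ring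
    rw [hsum]
    refine Submodule.sum_mem _ fun j _ => Submodule.sum_mem _ fun i _ =>
      Submodule.smul_mem _ _ (Submodule.subset_span
        ⟨fun k => P k i, fun k => Q j k, ?_, ?_, fun _ => rfl⟩)
    · funext k
      exact congrFun (congrFun hP k) i
    · funext k
      have hjk := congrFun (congrFun hQ j) k
      simpa [Matrix.mul_apply, Matrix.mulVec, dotProduct, mul_comm] using hjk
  · refine sup_le (Submodule.span_le.mpr ?_) ?_
    · rintro w ⟨u, v, hu, hv, hw⟩
      obtain rfl : w = fun p => Matrix.vecMulVec u v p.1 p.2 := funext hw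
      refine LinearMap.mem_ker.mpr (funext fun p => ?_)
      rw [Matrix.mulVecLin_apply, hmul, Matrix.mul_vecMulVec, Matrix.vecMulVec_mul,
        Matrix.vecMul_transpose, hu, hv]
      simp [Matrix.vecMulVec_apply]
    · rintro _ ⟨w, rfl⟩
      let W : Matrix (Fin n₁) (Fin n₂) (ZMod 2) := Matrix.of fun i j => w (i, j)
      have hw : bd.mulVec w = fun p => (δ₁ * W + W * δ₂.transpose) p.1 p.2 := funext (hmul W)
      refine LinearMap.mem_ker.mpr (funext fun p => ?_)
      rw [Matrix.mulVecLin_apply, Matrix.mulVecLin_apply, hw, hmul, Matrix.mul_add,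
        Matrix.add_mul, ← Matrix.mul_assoc, h₁, Matrix.mul_assoc W, h₂', Matrix.zero_mul,
        Matrix.mul_zero, zero_add, add_zero, ← Matrix.mul_assoc]
      exact CharTwo.add_self_eq_zero _
end

section
/- Let δ₁ be an n₁×n₁ matrix and δ₂ an n₂×n₂ matrix over ℤ₂ with δ₁·δ₁ = 0 and δ₂·δ₂ = 0, and let ∂ = δ₁ ⊗ 1 + 1 ⊗ δ₂ be the homological product boundary operator. Then the number of logical qubits multiplies: as integers, n₁·n₂ − 2·rank(∂) = (n₁ − 2·rank(δ₁))·(n₂ − 2·rank(δ₂)). -/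
open Module TensorProduct
open scoped Kronecker

/-- `H` is a homotopy contracting the square-zero endomorphism `D` onto the image of the
idempotent `P`, which therefore represents the homology of `D`. -/
structure IsHomologyContraction {R : Type*} [Ring R] (D H P : R) : Prop where
  sq_zero : D * D = 0
  mul_proj : D * P = 0
  proj_mul : P * D = 0
  proj_idem : P * P = P
  homotopy : D * H + H * D + P = 1

/-- If `G` is a generalized inverse of a square-zero `D`, then `G - G * G * D` is a contracting
homotopy whose associated projection is idempotent. -/
theorem IsHomologyContraction.of_generalizedInverse {R : Type*} [Ring R] {D G : R}
    (hD : D * D = 0) (hG : D * G * D = D) :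
    IsHomologyContraction D (G - G * G * D)
      (1 - D * (G - G * G * D) - (G - G * G * D) * D) := by
  set H := G - G * G * D with hH
  have hHD : H * D = G * D := by
    rw [hH, sub_mul, mul_assoc (G * G), hD, mul_zero, sub_zero]
  have hDHD : D * (H * D) = D := by rw [hHD, ← mul_assoc, hG]
  have hDHHD : D * H * (H * D) = 0 := by
    have h : D * H * (H * D) = D * G * G * D - D * G * G * (D * G * D) := by
      rw [hHD, hH]; noncomm_ring
    rw [h, hG, sub_self]
  have hDP : D * (1 - D * H - H * D) = 0 := by
    rw [mul_sub, mul_sub, hDHD, ← mul_assoc, hD]; simp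
  have hPD : (1 - D * H - H * D) * D = 0 := by
    rw [sub_mul, sub_mul, mul_assoc D, hDHD, mul_assoc H, hD]; simp
  refine ⟨hD, hDP, hPD, ?_, by abel⟩
  have hPHD : (1 - D * H - H * D) * (H * D) = 0 := by
    rw [sub_mul, sub_mul, hDHHD, mul_assoc H, hDHD]; simp
  rw [mul_sub _ _ (H * D), mul_sub, hPHD, ← mul_assoc, hPD]
  simp

variable {K V W : Type*} [Field K] [AddCommGroup V] [Module K V] [AddCommGroup W] [Module K W]

theorem LinearMap.exists_generalizedInverse (f : V →ₗ[K] W) :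
    ∃ g : W →ₗ[K] V, f ∘ₗ g ∘ₗ f = f := by
  obtain ⟨s, hs⟩ := f.rangeRestrict.exists_rightInverse_of_surjective f.range_rangeRestrict
  obtain ⟨g, hg⟩ := LinearMap.exists_extend s
  refine ⟨g, LinearMap.ext fun x => ?_⟩
  have hgx : g (f x) = s (f.rangeRestrict x) := congr($hg (f.rangeRestrict x))
  have hsx : f (s (f.rangeRestrict x)) = f x :=
    congrArg Subtype.val congr($hs (f.rangeRestrict x))
  simp [hgx, hsx]

theorem exists_isHomologyContraction {D : End K V} (hD : D * D = 0) :
    ∃ H P : End K V, IsHomologyContraction D H P := by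
  obtain ⟨G, hG⟩ := LinearMap.exists_generalizedInverse D
  exact ⟨_, _, .of_generalizedInverse hD hG⟩

namespace IsHomologyContraction

theorem finrank_eq [FiniteDimensional K V] {D H P : End K V} (h : IsHomologyContraction D H P) :
    finrank K V = 2 * finrank K (LinearMap.range D) + finrank K (LinearMap.range P) := by
  have hDD (x : V) : D (D x) = 0 := congr($h.sq_zero x)
  have hDP (x : V) : D (P x) = 0 := congr($h.mul_proj x)
  have hPD (x : V) : P (D x) = 0 := congr($h.proj_mul x)
  have hPP (x : V) : P (P x) = P x := congr($h.proj_idem x)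
  have hH (x : V) : D (H x) + H (D x) + P x = x := congr($h.homotopy x)
  have hker : LinearMap.range D ⊔ LinearMap.range P = LinearMap.ker D := by
    refine le_antisymm (sup_le ?_ ?_) fun x hx => ?_
    · rintro _ ⟨x, rfl⟩
      exact hDD x
    · rintro _ ⟨x, rfl⟩
      exact hDP x
    · rw [LinearMap.mem_ker] at hx
      exact Submodule.mem_sup.2 ⟨D (H x), ⟨_, rfl⟩, P x, ⟨_, rfl⟩, by simpa [hx] using hH x⟩
  have hdisj : LinearMap.range D ⊓ LinearMap.range P = ⊥ := by
    refine (Submodule.eq_bot_iff _).2 ?_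
    rintro _ ⟨⟨x, rfl⟩, ⟨y, hy⟩⟩
    rw [← hy, ← hPP, hy, hPD]
  have hsum := Submodule.finrank_sup_add_finrank_inf_eq (LinearMap.range D) (LinearMap.range P)
  rw [hker, hdisj, finrank_bot] at hsum
  have := D.finrank_range_add_finrank_ker
  lia

/-- In characteristic two, contractions of two square-zero endomorphisms combine into one of
their homological product. -/
theorem tensorProduct [CharP K 2] {D₁ H₁ P₁ : End K V} {D₂ H₂ P₂ : End K W}
    (h₁ : IsHomologyContraction D₁ H₁ P₁) (h₂ : IsHomologyContraction D₂ H₂ P₂) :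
    IsHomologyContraction (map D₁ 1 + map 1 D₂) (map H₁ 1 + map P₁ H₂) (map P₁ P₂) := by
  have two_torsion (x : End K (V ⊗[K] W)) : x + x = 0 := by
    rw [← two_smul K, CharTwo.two_eq_zero, zero_smul]
  constructor
  · simp only [add_mul, mul_add, ← TensorProduct.map_mul, h₁.sq_zero, h₂.sq_zero, one_mul, mul_one,
      map_zero_left, map_zero_right, zero_add, add_zero, two_torsion]
  · simp only [add_mul, ← TensorProduct.map_mul, h₁.mul_proj, h₂.mul_proj, one_mul,
      map_zero_left, map_zero_right, add_zero]
  · simp only [mul_add, ← TensorProduct.map_mul, h₁.proj_mul, h₂.proj_mul, mul_one,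
      map_zero_left, map_zero_right, add_zero]
  · rw [← TensorProduct.map_mul, h₁.proj_idem, h₂.proj_idem]
  · simp only [add_mul, mul_add, ← TensorProduct.map_mul, h₁.mul_proj, h₁.proj_mul, one_mul,
      mul_one, map_zero_left, zero_add, add_zero]
    calc _ = map (D₁ * H₁ + H₁ * D₁) 1 + map P₁ (D₂ * H₂ + H₂ * D₂ + P₂)
          + (map H₁ D₂ + map H₁ D₂) := by
          simp only [map_add_left, map_add_right]
          abel
      _ = 1 := by
          rw [two_torsion, add_zero, h₂.homotopy, ← map_add_left, h₁.homotopy,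
            TensorProduct.map_one]

end IsHomologyContraction

theorem TensorProduct.finrank_range_map {V₂ W₂ : Type*} [AddCommGroup V₂] [Module K V₂]
    [AddCommGroup W₂] [Module K W₂] (f : V →ₗ[K] V₂) (g : W →ₗ[K] W₂) :
    finrank K (LinearMap.range (map f g)) =
      finrank K (LinearMap.range f) * finrank K (LinearMap.range g) := by
  have hinj : Function.Injective (mapIncl (LinearMap.range f) (LinearMap.range g)) :=
    map_injective_of_flat_flat _ _ (Submodule.subtype_injective _) (Submodule.subtype_injective _)
  rw [range_map, ← range_mapIncl, LinearMap.finrank_range_of_inj hinj, finrank_tensorProduct]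

/-- The dimension of homology is multiplicative under the homological product. -/
theorem finrank_homologicalProduct [CharP K 2] [FiniteDimensional K V] [FiniteDimensional K W]
    {D₁ : End K V} {D₂ : End K W} (h₁ : D₁ * D₁ = 0) (h₂ : D₂ * D₂ = 0) :
    (finrank K V * finrank K W : ℤ) - 2 * finrank K (LinearMap.range (map D₁ 1 + map 1 D₂)) =
      (finrank K V - 2 * finrank K (LinearMap.range D₁)) *
        (finrank K W - 2 * finrank K (LinearMap.range D₂)) := by
  obtain ⟨H₁, P₁, hc₁⟩ := exists_isHomologyContraction h₁
  obtain ⟨H₂, P₂, hc₂⟩ := exists_isHomologyContraction h₂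
  have hV := hc₁.finrank_eq
  have hW := hc₂.finrank_eq
  have hVW := (hc₁.tensorProduct hc₂).finrank_eq
  rw [finrank_range_map, finrank_tensorProduct] at hVW
  zify at hV hW hVW
  have hV' : (finrank K V : ℤ) - 2 * finrank K (LinearMap.range D₁) =
      finrank K (LinearMap.range P₁) := by linarith
  have hW' : (finrank K W : ℤ) - 2 * finrank K (LinearMap.range D₂) =
      finrank K (LinearMap.range P₂) := by linarith
  rw [hV', hW']
  linarith

/-- The number of logical qubits multiplies under the
homological product: `n₁n₂ - 2·rank(∂) = (n₁ - 2·rank(δ₁))·(n₂ - 2·rank(δ₂))`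
as integers. -/
theorem homological_product_logical_qubits
    {n₁ n₂ : ℕ} (δ₁ : Matrix (Fin n₁) (Fin n₁) (ZMod 2))
    (δ₂ : Matrix (Fin n₂) (Fin n₂) (ZMod 2))
    (h₁ : δ₁ * δ₁ = 0) (h₂ : δ₂ * δ₂ = 0)
    (bd : Matrix (Fin n₁ × Fin n₂) (Fin n₁ × Fin n₂) (ZMod 2))
    (hbd : ∀ p q : Fin n₁ × Fin n₂,
      bd p q = δ₁ p.1 q.1 * (if p.2 = q.2 then 1 else 0)
        + (if p.1 = q.1 then 1 else 0) * δ₂ p.2 q.2) :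
    ((n₁ * n₂ : ℕ) : ℤ) - 2 * (bd.rank : ℤ)
      = ((n₁ : ℤ) - 2 * (δ₁.rank : ℤ)) * ((n₂ : ℤ) - 2 * (δ₂.rank : ℤ)) := by
  let b₁ := Pi.basisFun (ZMod 2) (Fin n₁)
  let b₂ := Pi.basisFun (ZMod 2) (Fin n₂)
  have hbd' : bd = δ₁ ⊗ₖ 1 + 1 ⊗ₖ δ₂ := by
    ext p q
    simp [hbd, Matrix.one_apply]
  have hlin : Matrix.toLin (b₁.tensorProduct b₂) (b₁.tensorProduct b₂) bd =
      map (Matrix.toLin b₁ b₁ δ₁) 1 + map 1 (Matrix.toLin b₂ b₂ δ₂) := by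
    rw [hbd', map_add, Matrix.toLin_kronecker, Matrix.toLin_kronecker, Matrix.toLin_one,
      Matrix.toLin_one]
    rfl
  have hsq₁ : (Matrix.toLin b₁ b₁ δ₁ : End (ZMod 2) (Fin n₁ → ZMod 2)) *
      Matrix.toLin b₁ b₁ δ₁ = 0 := by
    rw [Module.End.mul_eq_comp, ← Matrix.toLin_mul, h₁, map_zero]
  have hsq₂ : (Matrix.toLin b₂ b₂ δ₂ : End (ZMod 2) (Fin n₂ → ZMod 2)) *
      Matrix.toLin b₂ b₂ δ₂ = 0 := by
    rw [Module.End.mul_eq_comp, ← Matrix.toLin_mul, h₂, map_zero]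
  rw [bd.rank_eq_finrank_range_toLin (b₁.tensorProduct b₂) (b₁.tensorProduct b₂), hlin,
    δ₁.rank_eq_finrank_range_toLin b₁ b₁, δ₂.rank_eq_finrank_range_toLin b₂ b₂]
  simpa using finrank_homologicalProduct hsq₁ hsq₂
end

section
/- Let δ₁ be an n₁×n₁ matrix and δ₂ an n₂×n₂ matrix over ℤ₂ such that every row and every column of δ₁ has at most w₁ nonzero entries and every row and every column of δ₂ has at most w₂ nonzero entries. Then every row and every column of the homological product boundary operator ∂ = δ₁ ⊗ 1 + 1 ⊗ δ₂ has at most w₁ + w₂ nonzero entries. -/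
/-- A subset of the cross `{(i, b) | P i} ∪ {(a, j) | Q j}` in a product of finite types has at
most `#{i | P i} + #{j | Q j}` elements. -/
theorem card_filter_le_add_of_subset_cross {α β : Type*} [Fintype α] [Fintype β]
    {P : α → Prop} {Q : β → Prop} {R : α × β → Prop}
    [DecidablePred P] [DecidablePred Q] [DecidablePred R] (a : α) (b : β)
    (h : ∀ q, R q → P q.1 ∧ q.2 = b ∨ q.1 = a ∧ Q q.2) :
    (Finset.univ.filter R).card ≤ (Finset.univ.filter P).card + (Finset.univ.filter Q).card := by
  classical
  calc (Finset.univ.filter R).card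
      ≤ ((Finset.univ.filter P).image (fun i => (i, b)) ∪
          (Finset.univ.filter Q).image (fun j => (a, j))).card := by
        refine Finset.card_le_card fun q hq => ?_
        obtain ⟨hP, rfl⟩ | ⟨rfl, hQ⟩ := h q (Finset.mem_filter.mp hq).2
        · exact Finset.mem_union_left _ (Finset.mem_image.mpr ⟨q.1, by simpa using hP, rfl⟩)
        · exact Finset.mem_union_right _ (Finset.mem_image.mpr ⟨q.2, by simpa using hQ, rfl⟩)
    _ ≤ _ := (Finset.card_union_le _ _).trans
        (add_le_add Finset.card_image_le Finset.card_image_le)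

/-- If every row and column of `δ₁` has at most `w₁` nonzero
entries and every row and column of `δ₂` has at most `w₂`, then every row and
column of the homological product boundary operator `∂ = δ₁ ⊗ 1 + 1 ⊗ δ₂` has at
most `w₁ + w₂` nonzero entries. -/
theorem homological_product_sparsity
    {n₁ n₂ : ℕ} (δ₁ : Matrix (Fin n₁) (Fin n₁) (ZMod 2))
    (δ₂ : Matrix (Fin n₂) (Fin n₂) (ZMod 2)) (w₁ w₂ : ℕ)
    (h₁row : ∀ i : Fin n₁, (Finset.univ.filter fun j : Fin n₁ => δ₁ i j ≠ 0).card ≤ w₁)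
    (h₁col : ∀ j : Fin n₁, (Finset.univ.filter fun i : Fin n₁ => δ₁ i j ≠ 0).card ≤ w₁)
    (h₂row : ∀ i : Fin n₂, (Finset.univ.filter fun j : Fin n₂ => δ₂ i j ≠ 0).card ≤ w₂)
    (h₂col : ∀ j : Fin n₂, (Finset.univ.filter fun i : Fin n₂ => δ₂ i j ≠ 0).card ≤ w₂)
    (bd : Matrix (Fin n₁ × Fin n₂) (Fin n₁ × Fin n₂) (ZMod 2))
    (hbd : ∀ p q : Fin n₁ × Fin n₂,
      bd p q = δ₁ p.1 q.1 * (if p.2 = q.2 then 1 else 0)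
        + (if p.1 = q.1 then 1 else 0) * δ₂ p.2 q.2) :
    (∀ p : Fin n₁ × Fin n₂,
      (Finset.univ.filter fun q : Fin n₁ × Fin n₂ => bd p q ≠ 0).card ≤ w₁ + w₂) ∧
    (∀ q : Fin n₁ × Fin n₂,
      (Finset.univ.filter fun p : Fin n₁ × Fin n₂ => bd p q ≠ 0).card ≤ w₁ + w₂) := by
  have hcross : ∀ p q, bd p q ≠ 0 →
      δ₁ p.1 q.1 ≠ 0 ∧ p.2 = q.2 ∨ p.1 = q.1 ∧ δ₂ p.2 q.2 ≠ 0 := by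
    intro p q hpq
    contrapose! hpq
    rw [hbd]
    by_cases hfst : p.1 = q.1 <;> by_cases hsnd : p.2 = q.2 <;> simp_all
  constructor
  · intro p
    exact (card_filter_le_add_of_subset_cross p.1 p.2 fun q hq =>
      (hcross p q hq).imp (And.imp_right Eq.symm) (And.imp_left Eq.symm)).trans
      (add_le_add (h₁row p.1) (h₂row p.2))
  · intro q
    exact (card_filter_le_add_of_subset_cross q.1 q.2 fun p hp => hcross p q hp).trans
      (add_le_add (h₁col q.1) (h₂col q.2))
end

section
/- Let δ₁ be an n₁×n₁ matrix and δ₂ an n₂×n₂ matrix over ℤ₂ with δ₁·δ₁ = 0 and δ₂·δ₂ = 0, and let ∂ = δ₁ ⊗ 1 + 1 ⊗ δ₂. If v₁ is a Z-logical operator of δ₁ (δ₁·v₁ = 0 and v₁ not in the column space of δ₁) and v₂ is a Z-logical operator of δ₂, then the pure tensor w defined by w(i,j) = v₁(i)·v₂(j) is a Z-logical operator of ∂ (∂·w = 0 and w is not in the column space of ∂), and its Hamming weight equals the product of the Hamming weights of v₁ and v₂. Consequently, the Z-distance of the homological product code is at most the product of the Z-distances of the two codes. -/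
open scoped Kronecker

theorem Matrix.kronecker_mulVec_mul {l m n p R : Type*} [CommSemiring R] [Fintype m] [Fintype p]
    (A : Matrix l m R) (B : Matrix n p R) (x : m → R) (y : p → R) :
    (A ⊗ₖ B).mulVec (fun q => x q.1 * y q.2) =
      fun q => A.mulVec x q.1 * B.mulVec y q.2 := by
  ext q
  simp only [Matrix.mulVec, dotProduct, Fintype.sum_mul_sum, Fintype.sum_prod_type,
    Matrix.kroneckerMap_apply, mul_mul_mul_comm]

theorem Matrix.mul_vecMul_kronecker {l m n p R : Type*} [CommSemiring R] [Fintype l] [Fintype n]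
    (A : Matrix l m R) (B : Matrix n p R) (x : l → R) (y : n → R) :
    Matrix.vecMul (fun q => x q.1 * y q.2) (A ⊗ₖ B) =
      fun q => Matrix.vecMul x A q.1 * Matrix.vecMul y B q.2 := by
  ext q
  simp only [Matrix.vecMul, dotProduct, Fintype.sum_mul_sum, Fintype.sum_prod_type,
    Matrix.kroneckerMap_apply, mul_mul_mul_comm]

/-- A vector outside the column space of `A` is detected by a vector in the left kernel of `A`. -/
theorem Matrix.exists_vecMul_eq_zero_of_notMem_range_mulVec {m n K : Type*} [Field K]
    [Fintype m] [Fintype n] (A : Matrix m n K) {v : m → K} (hv : v ∉ Set.range A.mulVec) :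
    ∃ u : m → K, Matrix.vecMul u A = 0 ∧ u ⬝ᵥ v ≠ 0 := by
  classical
  have hv' : v ∉ LinearMap.range A.mulVecLin := hv
  obtain ⟨f, hfv, hf⟩ := Submodule.exists_le_ker_of_notMem hv'
  obtain ⟨u, rfl⟩ := (dotProductEquiv K m).surjective f
  refine ⟨u, dotProduct_eq_zero _ fun x => ?_, hfv⟩
  rw [← Matrix.dotProduct_mulVec]
  exact hf ⟨x, rfl⟩

theorem Fintype.card_filter_mul_ne_zero {m n R : Type*} [Fintype m] [Fintype n]
    [MulZeroClass R] [NoZeroDivisors R] [DecidableEq R] (x : m → R) (y : n → R) :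
    (Finset.univ.filter fun p : m × n => x p.1 * y p.2 ≠ 0).card =
      (Finset.univ.filter fun i => x i ≠ 0).card * (Finset.univ.filter fun j => y j ≠ 0).card := by
  simp only [← Finset.card_product, ← Finset.filter_product, Finset.univ_product_univ,
    mul_ne_zero_iff]

/-- The pure tensor of Z-logical operators `v₁`, `v₂` of `δ₁`,
`δ₂` is a Z-logical operator of the homological product boundary operator
`∂ = δ₁ ⊗ 1 + 1 ⊗ δ₂`, of Hamming weight `wt(v₁)·wt(v₂)`; hence the Z-distance
of the product code is at most the product of the Z-distances. -/
theorem homological_product_tensor_Zlogical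
    {n₁ n₂ : ℕ} (δ₁ : Matrix (Fin n₁) (Fin n₁) (ZMod 2))
    (δ₂ : Matrix (Fin n₂) (Fin n₂) (ZMod 2))
    (h₁ : δ₁ * δ₁ = 0) (h₂ : δ₂ * δ₂ = 0)
    (bd : Matrix (Fin n₁ × Fin n₂) (Fin n₁ × Fin n₂) (ZMod 2))
    (hbd : ∀ p q : Fin n₁ × Fin n₂,
      bd p q = δ₁ p.1 q.1 * (if p.2 = q.2 then 1 else 0)
        + (if p.1 = q.1 then 1 else 0) * δ₂ p.2 q.2)
    (v₁ : Fin n₁ → ZMod 2) (hv₁ker : δ₁.mulVec v₁ = 0)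
    (hv₁log : v₁ ∉ Set.range δ₁.mulVec)
    (v₂ : Fin n₂ → ZMod 2) (hv₂ker : δ₂.mulVec v₂ = 0)
    (hv₂log : v₂ ∉ Set.range δ₂.mulVec)
    (w : Fin n₁ × Fin n₂ → ZMod 2)
    (hw : ∀ p : Fin n₁ × Fin n₂, w p = v₁ p.1 * v₂ p.2) :
    bd.mulVec w = 0 ∧ w ∉ Set.range bd.mulVec ∧
      (Finset.univ.filter fun p : Fin n₁ × Fin n₂ => w p ≠ 0).card
        = (Finset.univ.filter fun i : Fin n₁ => v₁ i ≠ 0).card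
          * (Finset.univ.filter fun j : Fin n₂ => v₂ j ≠ 0).card := by
  obtain rfl : w = fun p => v₁ p.1 * v₂ p.2 := funext hw
  obtain rfl : bd = δ₁ ⊗ₖ 1 + 1 ⊗ₖ δ₂ := by
    ext p q
    simp [hbd, Matrix.one_apply]
  refine ⟨?_, ?_, Fintype.card_filter_mul_ne_zero v₁ v₂⟩
  · ext p
    simp [Matrix.add_mulVec, Matrix.kronecker_mulVec_mul, hv₁ker, hv₂ker]
  · rintro ⟨x, hx⟩
    obtain ⟨u₁, hu₁, hne₁⟩ := δ₁.exists_vecMul_eq_zero_of_notMem_range_mulVec hv₁log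
    obtain ⟨u₂, hu₂, hne₂⟩ := δ₂.exists_vecMul_eq_zero_of_notMem_range_mulVec hv₂log
    apply mul_ne_zero hne₁ hne₂
    calc (u₁ ⬝ᵥ v₁) * (u₂ ⬝ᵥ v₂)
        = (fun p : Fin n₁ × Fin n₂ => u₁ p.1 * u₂ p.2) ⬝ᵥ fun p => v₁ p.1 * v₂ p.2 := by
          simp only [dotProduct, Fintype.sum_mul_sum, Fintype.sum_prod_type, mul_mul_mul_comm]
      _ = 0 := by
          rw [← hx, Matrix.dotProduct_mulVec, Matrix.vecMul_add, Matrix.mul_vecMul_kronecker,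
            Matrix.mul_vecMul_kronecker, hu₁, hu₂]
          simp [dotProduct]
end

section
/- Let H_X (size l_X×n) and H_Z (size l_Z×n) be matrices over ℤ₂ with H_X·H_Zᵀ = 0. Define the doubled code on qubits indexed by Fin 4 × Fin n with X-check matrix G_X consisting of the rows: (s,0,s,0) for each row s of H_X, (0,t,t,0) for each row t of H_Z, and (e_j,e_j,e_j,e_j) for each standard basis vector e_j (j ∈ Fin n); and Z-check matrix G_Z consisting of the rows: (t,0,0,t) for each row t of H_Z, (0,s,0,s) for each row s of H_X, and (e_j,e_j,e_j,e_j) for each j ∈ Fin n (here (a,b,c,d) denotes the vector on Fin 4 × Fin n whose block-0,1,2,3 components are a,b,c,d). Then G_X·G_Zᵀ = 0, i.e., the doubled code is a valid CSS code. -/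
/-- The doubled code of a CSS code `(H_X, H_Z)` (with
`H_X·H_Zᵀ = 0`) is a valid CSS code: its check matrices `G_X` (rows `(s,0,s,0)`,
`(0,t,t,0)`, `(e_j,e_j,e_j,e_j)`) and `G_Z` (rows `(t,0,0,t)`, `(0,s,0,s)`,
`(e_j,e_j,e_j,e_j)`) satisfy `G_X·G_Zᵀ = 0`. -/
theorem doubled_code_is_css
    {lX lZ n : ℕ} (HX : Matrix (Fin lX) (Fin n) (ZMod 2))
    (HZ : Matrix (Fin lZ) (Fin n) (ZMod 2))
    (hcomm : HX * HZ.transpose = 0)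
    (GX : Matrix (Fin lX ⊕ Fin lZ ⊕ Fin n) (Fin 4 × Fin n) (ZMod 2))
    (GZ : Matrix (Fin lZ ⊕ Fin lX ⊕ Fin n) (Fin 4 × Fin n) (ZMod 2))
    (hGX₁ : ∀ (i : Fin lX) (q : Fin 4 × Fin n),
      GX (Sum.inl i) q = if q.1 = 0 ∨ q.1 = 2 then HX i q.2 else 0)
    (hGX₂ : ∀ (i : Fin lZ) (q : Fin 4 × Fin n),
      GX (Sum.inr (Sum.inl i)) q = if q.1 = 1 ∨ q.1 = 2 then HZ i q.2 else 0)
    (hGX₃ : ∀ (j : Fin n) (q : Fin 4 × Fin n),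
      GX (Sum.inr (Sum.inr j)) q = if q.2 = j then 1 else 0)
    (hGZ₁ : ∀ (i : Fin lZ) (q : Fin 4 × Fin n),
      GZ (Sum.inl i) q = if q.1 = 0 ∨ q.1 = 3 then HZ i q.2 else 0)
    (hGZ₂ : ∀ (i : Fin lX) (q : Fin 4 × Fin n),
      GZ (Sum.inr (Sum.inl i)) q = if q.1 = 1 ∨ q.1 = 3 then HX i q.2 else 0)
    (hGZ₃ : ∀ (j : Fin n) (q : Fin 4 × Fin n),
      GZ (Sum.inr (Sum.inr j)) q = if q.2 = j then 1 else 0) :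
    GX * GZ.transpose = 0 := by
  have horth (i : Fin lX) (k : Fin lZ) : ∑ j, HX i j * HZ k j = 0 := by
    simpa [Matrix.mul_apply] using congrFun (congrFun hcomm i) k
  have horth' (k : Fin lZ) (i : Fin lX) : ∑ j, HZ k j * HX i j = 0 := by
    simpa only [mul_comm] using horth i k
  ext a b
  simp only [Matrix.mul_apply, Matrix.transpose_apply, Matrix.zero_apply,
    Fintype.sum_prod_type, Fin.sum_univ_four]
  rcases a with i | i | i <;> rcases b with k | k | k <;>
    simp [hGX₁, hGX₂, hGX₃, hGZ₁, hGZ₂, hGZ₃, horth, horth', CharTwo.add_self_eq_zero]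
end

section
/- Let H_X (size l_X×n) and H_Z (size l_Z×n) be matrices over ℤ₂. With the doubled-code check matrices G_X (rows (s,0,s,0) for rows s of H_X, (0,t,t,0) for rows t of H_Z, and (e_j,e_j,e_j,e_j) for j ∈ Fin n) and G_Z (rows (t,0,0,t) for rows t of H_Z, (0,s,0,s) for rows s of H_X, and (e_j,e_j,e_j,e_j) for j ∈ Fin n), the row space of G_X equals the row space of G_Z. (This is the complete symmetry between X- and Z-stabilizers of the doubled code, underlying its transversal Hadamard gate.) -/
/-- A submodule containing the block-repeated standard basis vectors contains every
block-repeated vector. -/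
theorem repeated_mem_of_repeated_basis_mem {R ι κ : Type*} [CommSemiring R] [Fintype κ]
    [DecidableEq κ] (V : Submodule R (ι × κ → R))
    (hV : ∀ j, (fun q : ι × κ => if q.2 = j then (1 : R) else 0) ∈ V) (v : κ → R) :
    (fun q : ι × κ => v q.2) ∈ V := by
  have h : (fun q : ι × κ => v q.2) =
      ∑ j, v j • (fun q : ι × κ => if q.2 = j then (1 : R) else 0) := by
    ext q
    simp [Finset.sum_apply]
  rw [h]
  exact V.sum_mem fun j _ => V.smul_mem _ (hV j)

/-- If a submodule contains the block-repeated standard basis vectors, it contains the vector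
equal to `v` on the blocks in `p` as soon as it contains the one supported on the
complementary blocks. -/
theorem block_mem_of_compl_block_mem {R ι κ : Type*} [CommRing R] [Fintype κ]
    [DecidableEq κ] (V : Submodule R (ι × κ → R))
    (hV : ∀ j, (fun q : ι × κ => if q.2 = j then (1 : R) else 0) ∈ V) (v : κ → R)
    (p p' : ι → Prop) [DecidablePred p] [DecidablePred p'] (hp : ∀ a, p' a ↔ ¬ p a)
    (h : (fun q : ι × κ => if p' q.1 then v q.2 else 0) ∈ V) :
    (fun q : ι × κ => if p q.1 then v q.2 else 0) ∈ V := by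
  convert V.sub_mem (repeated_mem_of_repeated_basis_mem V hV v) h using 1
  ext q
  by_cases hq : p q.1 <;> simp [hp, hq]

/-- For the doubled code of a CSS code `(H_X, H_Z)`, the row
space of the X-check matrix `G_X` equals the row space of the Z-check matrix
`G_Z` — the complete X/Z symmetry underlying its transversal Hadamard. -/
theorem doubled_code_row_space_symmetry
    {lX lZ n : ℕ} (HX : Matrix (Fin lX) (Fin n) (ZMod 2))
    (HZ : Matrix (Fin lZ) (Fin n) (ZMod 2))
    (GX : Matrix (Fin lX ⊕ Fin lZ ⊕ Fin n) (Fin 4 × Fin n) (ZMod 2))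
    (GZ : Matrix (Fin lZ ⊕ Fin lX ⊕ Fin n) (Fin 4 × Fin n) (ZMod 2))
    (hGX₁ : ∀ (i : Fin lX) (q : Fin 4 × Fin n),
      GX (Sum.inl i) q = if q.1 = 0 ∨ q.1 = 2 then HX i q.2 else 0)
    (hGX₂ : ∀ (i : Fin lZ) (q : Fin 4 × Fin n),
      GX (Sum.inr (Sum.inl i)) q = if q.1 = 1 ∨ q.1 = 2 then HZ i q.2 else 0)
    (hGX₃ : ∀ (j : Fin n) (q : Fin 4 × Fin n),
      GX (Sum.inr (Sum.inr j)) q = if q.2 = j then 1 else 0)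
    (hGZ₁ : ∀ (i : Fin lZ) (q : Fin 4 × Fin n),
      GZ (Sum.inl i) q = if q.1 = 0 ∨ q.1 = 3 then HZ i q.2 else 0)
    (hGZ₂ : ∀ (i : Fin lX) (q : Fin 4 × Fin n),
      GZ (Sum.inr (Sum.inl i)) q = if q.1 = 1 ∨ q.1 = 3 then HX i q.2 else 0)
    (hGZ₃ : ∀ (j : Fin n) (q : Fin 4 × Fin n),
      GZ (Sum.inr (Sum.inr j)) q = if q.2 = j then 1 else 0) :
    Submodule.span (ZMod 2) (Set.range GX) = Submodule.span (ZMod 2) (Set.range GZ) := by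
  have hX₁ : ∀ i, GX (Sum.inl i) = _ := fun i => funext (hGX₁ i)
  have hX₂ : ∀ i, GX (Sum.inr (Sum.inl i)) = _ := fun i => funext (hGX₂ i)
  have hX₃ : ∀ j, GX (Sum.inr (Sum.inr j)) = _ := fun j => funext (hGX₃ j)
  have hZ₁ : ∀ i, GZ (Sum.inl i) = _ := fun i => funext (hGZ₁ i)
  have hZ₂ : ∀ i, GZ (Sum.inr (Sum.inl i)) = _ := fun i => funext (hGZ₂ i)
  have hZ₃ : ∀ j, GZ (Sum.inr (Sum.inr j)) = _ := fun j => funext (hGZ₃ j)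
  have memX (r) : GX r ∈ Submodule.span (ZMod 2) (Set.range GX) :=
    Submodule.subset_span ⟨r, rfl⟩
  have memZ (r) : GZ r ∈ Submodule.span (ZMod 2) (Set.range GZ) :=
    Submodule.subset_span ⟨r, rfl⟩
  have unitX (j) := hX₃ j ▸ memX (Sum.inr (Sum.inr j))
  have unitZ (j) := hZ₃ j ▸ memZ (Sum.inr (Sum.inr j))
  apply le_antisymm <;> rw [Submodule.span_le] <;> rintro _ ⟨i | i | j, rfl⟩
  · rw [hX₁]
    exact block_mem_of_compl_block_mem _ unitZ (HX i) (fun a => a = 0 ∨ a = 2)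
      (fun a => a = 1 ∨ a = 3) (by decide) (hZ₂ i ▸ memZ (Sum.inr (Sum.inl i)))
  · rw [hX₂]
    exact block_mem_of_compl_block_mem _ unitZ (HZ i) (fun a => a = 1 ∨ a = 2)
      (fun a => a = 0 ∨ a = 3) (by decide) (hZ₁ i ▸ memZ (Sum.inl i))
  · rw [hX₃]
    exact unitZ j
  · rw [hZ₁]
    exact block_mem_of_compl_block_mem _ unitX (HZ i) (fun a => a = 0 ∨ a = 3)
      (fun a => a = 1 ∨ a = 2) (by decide) (hX₂ i ▸ memX (Sum.inr (Sum.inl i)))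
  · rw [hZ₂]
    exact block_mem_of_compl_block_mem _ unitX (HX i) (fun a => a = 1 ∨ a = 3)
      (fun a => a = 0 ∨ a = 2) (by decide) (hX₁ i ▸ memX (Sum.inl i))
  · rw [hZ₃]
    exact unitX j
end

section
/- Let H_X (size l_X×n) and H_Z (size l_Z×n) be matrices over ℤ₂ with rank(H_X) = l_X and rank(H_Z) = l_Z. Then the doubled-code X-check matrix G_X (rows (s,0,s,0) for rows s of H_X, (0,t,t,0) for rows t of H_Z, and (e_j,e_j,e_j,e_j) for j ∈ Fin n) has rank n + l_X + l_Z. Consequently the doubled code on 4n qubits encodes 4n − 2(n + l_X + l_Z) = 2(n − l_X − l_Z) logical qubits, i.e., twice the number encoded by the original code. -/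
/-- A matrix over a field whose rank equals its number of rows has linearly independent rows. -/
theorem Matrix.linearIndependent_row_of_rank_eq_card {m n K : Type*} [Fintype m] [Fintype n]
    [Field K] {A : Matrix m n K} (h : A.rank = Fintype.card m) : LinearIndependent K A.row := by
  rw [linearIndependent_iff_card_eq_finrank_span, Set.finrank, ← A.rank_eq_finrank_span_row, h]

/-- If `H_X`, `H_Z` have full ranks `l_X`, `l_Z`, then the
doubled-code X-check matrix `G_X` has rank `n + l_X + l_Z`; consequently the
doubled code on `4n` qubits encodes `4n - 2(n + l_X + l_Z) = 2(n - l_X - l_Z)`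
logical qubits, twice the number encoded by the original code. -/
theorem doubled_code_rank
    {lX lZ n : ℕ} (HX : Matrix (Fin lX) (Fin n) (ZMod 2))
    (HZ : Matrix (Fin lZ) (Fin n) (ZMod 2))
    (hrX : HX.rank = lX) (hrZ : HZ.rank = lZ)
    (GX : Matrix (Fin lX ⊕ Fin lZ ⊕ Fin n) (Fin 4 × Fin n) (ZMod 2))
    (hGX₁ : ∀ (i : Fin lX) (q : Fin 4 × Fin n),
      GX (Sum.inl i) q = if q.1 = 0 ∨ q.1 = 2 then HX i q.2 else 0)
    (hGX₂ : ∀ (i : Fin lZ) (q : Fin 4 × Fin n),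
      GX (Sum.inr (Sum.inl i)) q = if q.1 = 1 ∨ q.1 = 2 then HZ i q.2 else 0)
    (hGX₃ : ∀ (j : Fin n) (q : Fin 4 × Fin n),
      GX (Sum.inr (Sum.inr j)) q = if q.2 = j then 1 else 0) :
    GX.rank = n + lX + lZ ∧
      ((4 * n : ℕ) : ℤ) - 2 * ((n + lX + lZ : ℕ) : ℤ)
        = 2 * ((n : ℤ) - (lX : ℤ) - (lZ : ℤ)) := by
  refine ⟨?_, by push_cast; ring⟩
  have hX := Fintype.linearIndependent_iff.1
    (Matrix.linearIndependent_row_of_rank_eq_card (A := HX) (by rw [hrX, Fintype.card_fin]))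
  have hZ := Fintype.linearIndependent_iff.1
    (Matrix.linearIndependent_row_of_rank_eq_card (A := HZ) (by rw [hrZ, Fintype.card_fin]))
  have hG : LinearIndependent (ZMod 2) GX.row := by
    refine Fintype.linearIndependent_iff.2 fun g hg => ?_
    have entry : ∀ (b : Fin 4) (j : Fin n),
        (∑ i, g (.inl i) * if b = 0 ∨ b = 2 then HX i j else 0) +
          ((∑ i, g (.inr (.inl i)) * if b = 1 ∨ b = 2 then HZ i j else 0) +
            g (.inr (.inr j))) = 0 := fun b j => by
      simpa [Matrix.row, Fintype.sum_sum_type, hGX₁, hGX₂, hGX₃] using congrFun hg (b, j)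
    have g₃ : ∀ j, g (.inr (.inr j)) = 0 := fun j => by simpa using entry 3 j
    have g₁ : ∀ i, g (.inl i) = 0 := hX _ <| funext fun j => by
      simpa [Matrix.row, g₃] using entry 0 j
    have g₂ : ∀ i, g (.inr (.inl i)) = 0 := hZ _ <| funext fun j => by
      simpa [Matrix.row, g₃] using entry 1 j
    rintro (i | i | j)
    exacts [g₁ i, g₂ i, g₃ j]
  rw [hG.rank_matrix]
  simp only [Fintype.card_sum, Fintype.card_fin]
  ring
end

section
/- Let H_X (size l_X×n) and H_Z (size l_Z×n) be matrices over ℤ₂ with H_X·H_Zᵀ = 0. Suppose every Z-logical operator of the code has Hamming weight at least d_Z (every v with H_X·v = 0 not in the row space of H_Z has weight ≥ d_Z) and every X-logical operator has Hamming weight at least d_X (every u with H_Z·u = 0 not in the row space of H_X has weight ≥ d_X). Then every Z-logical operator of the doubled code — every vector w on Fin 4 × Fin n with G_X·w = 0 that is not in the row space of G_Z — has Hamming weight at least 2·min(d_X, d_Z): the doubled code's distance is twice that of the original code. -/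
/-- The linear map placing a copy of a vector in each block belonging to `s`. -/
def blockCopy (n : ℕ) (s : Finset (Fin 4)) :
    (Fin n → ZMod 2) →ₗ[ZMod 2] (Fin 4 × Fin n → ZMod 2) where
  toFun v q := if q.1 ∈ s then v q.2 else 0
  map_add' u v := by ext q; by_cases h : q.1 ∈ s <;> simp [h]
  map_smul' c v := by ext q; by_cases h : q.1 ∈ s <;> simp [h]

theorem blockCopy_apply {n : ℕ} (s : Finset (Fin 4)) (v : Fin n → ZMod 2)
    (q : Fin 4 × Fin n) : blockCopy n s v q = if q.1 ∈ s then v q.2 else 0 := rfl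

theorem LinearMap.map_mem_of_mem_span_range {R M N ι : Type*} [Semiring R]
    [AddCommMonoid M] [AddCommMonoid N] [Module R M] [Module R N] (f : M →ₗ[R] N)
    {g : ι → M} {S : Submodule R N} (hg : ∀ i, f (g i) ∈ S) {v : M}
    (hv : v ∈ Submodule.span R (Set.range g)) : f v ∈ S := by
  have hle : Submodule.span R (Set.range g) ≤ S.comap f :=
    Submodule.span_le.2 (Set.range_subset_iff.2 hg)
  exact hle hv

/-- If every column of `w` sums to zero, then `w` has at least two nonzero entries in each
column of the support of a vector `v` that is supported on nonzero columns of `w`. -/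
theorem two_mul_card_support_le {n : ℕ} (w : Fin 4 × Fin n → ZMod 2)
    (hw : ∀ j, w (0, j) + w (1, j) + w (2, j) + w (3, j) = 0) (v : Fin n → ZMod 2)
    (hv : ∀ j, v j ≠ 0 → ∃ k, w (k, j) ≠ 0) :
    2 * (Finset.univ.filter fun j : Fin n => v j ≠ 0).card ≤
      (Finset.univ.filter fun q : Fin 4 × Fin n => w q ≠ 0).card := by
  have column : ∀ a b c d : ZMod 2, a + b + c + d = 0 →
      (a ≠ 0 ∨ b ≠ 0 ∨ c ≠ 0 ∨ d ≠ 0) →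
      2 ≤ (if a ≠ 0 then 1 else 0) + (if b ≠ 0 then 1 else 0) +
        (if c ≠ 0 then 1 else 0) + (if d ≠ 0 then 1 else 0) := by decide
  rw [Finset.card_filter, Finset.card_filter, Fintype.sum_prod_type_right, Finset.mul_sum]
  refine Finset.sum_le_sum fun j _ => ?_
  rw [Fin.sum_univ_four]
  by_cases hj : v j = 0
  · simp [hj]
  · rw [if_pos hj]
    refine column _ _ _ _ (hw j) ?_
    simpa [Fin.exists_fin_succ] using hv j hj

/-- If every Z-logical operator of the CSS code `(H_X, H_Z)`
has weight at least `d_Z` and every X-logical operator has weight at least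
`d_X`, then every Z-logical operator of the doubled code has Hamming weight at
least `2·min(d_X, d_Z)`: the doubled code's distance is twice that of the
original code. -/
theorem doubled_code_distance
    {lX lZ n : ℕ} (HX : Matrix (Fin lX) (Fin n) (ZMod 2))
    (HZ : Matrix (Fin lZ) (Fin n) (ZMod 2))
    (hcomm : HX * HZ.transpose = 0)
    (dX dZ : ℕ)
    (hdZ : ∀ v : Fin n → ZMod 2, HX.mulVec v = 0 →
      v ∉ Submodule.span (ZMod 2) (Set.range HZ) →
      dZ ≤ (Finset.univ.filter fun j : Fin n => v j ≠ 0).card)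
    (hdX : ∀ u : Fin n → ZMod 2, HZ.mulVec u = 0 →
      u ∉ Submodule.span (ZMod 2) (Set.range HX) →
      dX ≤ (Finset.univ.filter fun j : Fin n => u j ≠ 0).card)
    (GX : Matrix (Fin lX ⊕ Fin lZ ⊕ Fin n) (Fin 4 × Fin n) (ZMod 2))
    (GZ : Matrix (Fin lZ ⊕ Fin lX ⊕ Fin n) (Fin 4 × Fin n) (ZMod 2))
    (hGX₁ : ∀ (i : Fin lX) (q : Fin 4 × Fin n),
      GX (Sum.inl i) q = if q.1 = 0 ∨ q.1 = 2 then HX i q.2 else 0)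
    (hGX₂ : ∀ (i : Fin lZ) (q : Fin 4 × Fin n),
      GX (Sum.inr (Sum.inl i)) q = if q.1 = 1 ∨ q.1 = 2 then HZ i q.2 else 0)
    (hGX₃ : ∀ (j : Fin n) (q : Fin 4 × Fin n),
      GX (Sum.inr (Sum.inr j)) q = if q.2 = j then 1 else 0)
    (hGZ₁ : ∀ (i : Fin lZ) (q : Fin 4 × Fin n),
      GZ (Sum.inl i) q = if q.1 = 0 ∨ q.1 = 3 then HZ i q.2 else 0)
    (hGZ₂ : ∀ (i : Fin lX) (q : Fin 4 × Fin n),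
      GZ (Sum.inr (Sum.inl i)) q = if q.1 = 1 ∨ q.1 = 3 then HX i q.2 else 0)
    (hGZ₃ : ∀ (j : Fin n) (q : Fin 4 × Fin n),
      GZ (Sum.inr (Sum.inr j)) q = if q.2 = j then 1 else 0)
    (w : Fin 4 × Fin n → ZMod 2)
    (hker : GX.mulVec w = 0)
    (hlog : w ∉ Submodule.span (ZMod 2) (Set.range GZ)) :
    2 * min dX dZ ≤ (Finset.univ.filter fun q : Fin 4 × Fin n => w q ≠ 0).card := by
  have hp : HX.mulVec (fun j => w (0, j) + w (2, j)) = 0 := by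
    ext i
    have h := congrFun hker (Sum.inl i)
    simp only [Matrix.mulVec, dotProduct, hGX₁, Fintype.sum_prod_type, Fin.sum_univ_four] at h
    simpa [Matrix.mulVec, dotProduct, mul_add, Finset.sum_add_distrib] using h
  have hq : HZ.mulVec (fun j => w (1, j) + w (2, j)) = 0 := by
    ext i
    have h := congrFun hker (Sum.inr (Sum.inl i))
    simp only [Matrix.mulVec, dotProduct, hGX₂, Fintype.sum_prod_type, Fin.sum_univ_four] at h
    simpa [Matrix.mulVec, dotProduct, mul_add, Finset.sum_add_distrib] using h
  have hcol : ∀ j, w (0, j) + w (1, j) + w (2, j) + w (3, j) = 0 := by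
    intro j
    have h := congrFun hker (Sum.inr (Sum.inr j))
    simp only [Matrix.mulVec, dotProduct, hGX₃, Fintype.sum_prod_type, Fin.sum_univ_four] at h
    simpa using h
  have hnontriv : (fun j => w (0, j) + w (2, j)) ∉ Submodule.span (ZMod 2) (Set.range HZ) ∨
      (fun j => w (1, j) + w (2, j)) ∉ Submodule.span (ZMod 2) (Set.range HX) := by
    by_contra! hcon
    apply hlog
    have mem_row (r) : GZ r ∈ Submodule.span (ZMod 2) (Set.range GZ) :=
      Submodule.subset_span ⟨r, rfl⟩
    have hZ := (blockCopy n {0, 3}).map_mem_of_mem_span_range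
      (S := Submodule.span (ZMod 2) (Set.range GZ)) (fun i => by
        convert mem_row (Sum.inl i) using 1
        ext q
        simp [hGZ₁, blockCopy_apply]) hcon.1
    have hX := (blockCopy n {1, 3}).map_mem_of_mem_span_range
      (S := Submodule.span (ZMod 2) (Set.range GZ)) (fun i => by
        convert mem_row (Sum.inr (Sum.inl i)) using 1
        ext q
        simp [hGZ₂, blockCopy_apply]) hcon.2
    have hC := (blockCopy n Finset.univ).map_mem_of_mem_span_range
      (S := Submodule.span (ZMod 2) (Set.range GZ)) (g := Pi.basisFun (ZMod 2) (Fin n))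
      (v := fun j => w (2, j)) (fun j => by
        convert mem_row (Sum.inr (Sum.inr j)) using 1
        ext q
        simp [hGZ₃, blockCopy_apply, Pi.single_apply]) (Module.Basis.mem_span _ _)
    convert add_mem (add_mem hZ hX) hC using 1
    have cancel : ∀ a b c d : ZMod 2, a + b + c + d = 0 →
        a = a + c + c ∧ b = b + c + c ∧ d = a + c + (b + c) + c := by decide
    ext ⟨k, j⟩
    obtain ⟨h0, h1, h3⟩ := cancel _ _ _ _ (hcol j)
    fin_cases k
    · simpa [blockCopy_apply] using h0
    · simpa [blockCopy_apply] using h1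
    · simp [blockCopy_apply]
    · simpa [blockCopy_apply] using h3
  have exists_of_add (k l : Fin 4) (j : Fin n) (h : w (k, j) + w (l, j) ≠ 0) :
      ∃ m, w (m, j) ≠ 0 := by
    by_contra! h0
    exact h (by rw [h0, h0, add_zero])
  rcases hnontriv with h | h
  · exact (Nat.mul_le_mul_left 2 ((min_le_right _ _).trans (hdZ _ hp h))).trans
      (two_mul_card_support_le w hcol _ fun j => exists_of_add 0 2 j)
  · exact (Nat.mul_le_mul_left 2 ((min_le_left _ _).trans (hdX _ hq h))).trans
      (two_mul_card_support_le w hcol _ fun j => exists_of_add 1 2 j)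
end
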